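/- arXiv:0802.4458 — 13 statements merged into one kernel-verified Lean document; each statement's English description precedes it below -/
import Mathlib

section
/- Let X be a topological space equipped with an extended metric d : X × X → [0,∞] (d(x,y) = 0 iff x = y, d symmetric, d satisfying the triangle inequality) which is lower semi-continuous, i.e. for every r ∈ [0,∞) the set {(x,y) : d(x,y) ≤ r} is closed in X × X with the product topology. Then X is Hausdorff. If moreover X is compact, then the metric refines the topology: for every open U ⊆ X and every x ∈ U there is r > 0 with the open metric ball B(x,r) = {y : d(x,y) < r} contained in U. -/
open Set Topology NNReal ENNReal

/-- An extended metric on `X`: `d x y = 0` iff `x = y`, symmetric, triangle inequality. -/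
def IsExtMetric {X : Type*} (d : X → X → ℝ≥0∞) : Prop :=
  (∀ x y, d x y = 0 ↔ x = y) ∧ (∀ x y, d x y = d y x) ∧ ∀ x y z, d x z ≤ d x y + d y z

/-- The metric refines the topology. -/
def MetricRefines {X : Type*} [TopologicalSpace X] (d : X → X → ℝ≥0∞) : Prop :=
  ∀ U : Set X, IsOpen U → ∀ x ∈ U, ∃ r : ℝ≥0, 0 < r ∧ {y | d x y < (r : ℝ≥0∞)} ⊆ U

/-- The metric is lower semi-continuous: for every finite `r`,
`{(x,y) : d x y ≤ r}` is closed in the product topology. -/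
def LowerSemiContinuousMetric {X : Type*} [TopologicalSpace X] (d : X → X → ℝ≥0∞) : Prop :=
  ∀ r : ℝ≥0, IsClosed {p : X × X | d p.1 p.2 ≤ (r : ℝ≥0∞)}

/-- A topometric structure on a topological space. -/
def IsTopometric {X : Type*} [TopologicalSpace X] (d : X → X → ℝ≥0∞) : Prop :=
  IsExtMetric d ∧ MetricRefines d ∧ LowerSemiContinuousMetric d

/-- Distance from a point to a set (infimum over the set; `∞` when empty). -/
noncomputable def distToSet {X : Type*} (d : X → X → ℝ≥0∞) (x : X) (A : Set X) : ℝ≥0∞ :=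
  ⨅ a ∈ A, d x a

/-- a topological space with a lower semi-continuous extended metric is
Hausdorff; if moreover it is compact, the metric refines the topology. -/
theorem stmt_0 {X : Type*} [TopologicalSpace X] (d : X → X → ℝ≥0∞)
    (hmet : IsExtMetric d) (hlsc : LowerSemiContinuousMetric d) :
    T2Space X ∧ (CompactSpace X → MetricRefines d) := by
  obtain ⟨h0, -, -⟩ := hmet
  refine ⟨?_, ?_⟩
  · rw [t2_iff_isClosed_diagonal]
    convert hlsc 0 using 1
    ext p
    simp [h0]
  · intro hc U hU x hx
    have hcl : ∀ r : ℝ≥0, IsClosed {y | d x y ≤ (r : ℝ≥0∞)} := fun r =>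
      (hlsc r).preimage (f := fun y => (x, y)) (by fun_prop)
    by_contra hcon
    push Not at hcon
    have hC : ∀ n : ℕ, IsClosed ({y | d x y ≤ ((1 / ((n : ℝ≥0) + 1) : ℝ≥0) : ℝ≥0∞)} ∩ Uᶜ) :=
      fun n => (hcl _).inter hU.isClosed_compl
    obtain ⟨y, hy⟩ := IsCompact.nonempty_iInter_of_sequence_nonempty_isCompact_isClosed
      (fun n : ℕ => {y | d x y ≤ ((1 / ((n : ℝ≥0) + 1) : ℝ≥0) : ℝ≥0∞)} ∩ Uᶜ)
      (fun n => by
        refine inter_subset_inter_left _ fun y hy => ?_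
        refine le_trans (b := ((1 / (((n + 1 : ℕ) : ℝ≥0) + 1) : ℝ≥0) : ℝ≥0∞)) hy ?_
        rw [ENNReal.coe_le_coe]
        gcongr
        simp)
      (fun n => by
        obtain ⟨y, hy, hyU⟩ := Set.not_subset.1 (hcon (1 / ((n : ℝ≥0) + 1)) (by positivity))
        have hy2 : d x y < ((1 / ((n : ℝ≥0) + 1) : ℝ≥0) : ℝ≥0∞) := hy
        exact ⟨y, hy2.le, hyU⟩)
      (hC 0).isCompact hC
    rw [mem_iInter] at hy
    have hz : d x y = 0 := by
      by_contra hne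
      obtain ⟨r, hr0, hr⟩ := ENNReal.lt_iff_exists_nnreal_btwn.1 (pos_iff_ne_zero.2 hne)
      obtain ⟨n, hn⟩ := exists_nat_one_div_lt (K := ℝ≥0) (ENNReal.coe_pos.1 hr0)
      exact absurd (lt_of_lt_of_le hr (hy n).1) (not_lt.2 (ENNReal.coe_le_coe.2 hn.le))
    exact (hy 0).2 ((h0 x y).1 hz ▸ hx)
end

section
/- Let X be a topometric space, F ⊆ X a compact subset, and r ∈ [0,∞). Then the closed metric neighbourhood B̄(F,r) = {x ∈ X : d(x,F) ≤ r} is closed in X. -/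
open Set Topology NNReal ENNReal

/-- in a topometric space, the closed metric neighbourhood of a compact set
is closed. -/
theorem stmt_1 {X : Type*} [TopologicalSpace X] (d : X → X → ℝ≥0∞)
    (htm : IsTopometric d) (F : Set X) (hF : IsCompact F) (r : ℝ≥0) :
    IsClosed {x : X | distToSet d x F ≤ (r : ℝ≥0∞)} := by
  obtain ⟨-, -, hlsc⟩ := htm
  rw [← isOpen_compl_iff, isOpen_iff_mem_nhds]
  intro x hx
  simp only [mem_compl_iff, mem_setOf_eq, not_le] at hx
  obtain ⟨s, hrs, hs⟩ := ENNReal.lt_iff_exists_nnreal_btwn.1 hx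
  have hsub : ({x} : Set X) ×ˢ F ⊆ {p : X × X | d p.1 p.2 ≤ (s : ℝ≥0∞)}ᶜ := by
    rintro ⟨y, a⟩ ⟨hy, ha⟩
    simp only [mem_singleton_iff] at hy ha
    subst hy
    simp only [mem_compl_iff, mem_setOf_eq, not_le]
    exact lt_of_lt_of_le hs (iInf₂_le a ha)
  obtain ⟨U, V, hU, -, hxU, hFV, hUV⟩ :=
    generalized_tube_lemma isCompact_singleton hF (hlsc s).isOpen_compl hsub
  refine Filter.mem_of_superset (hU.mem_nhds (hxU rfl)) ?_
  intro y hy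
  simp only [mem_compl_iff, mem_setOf_eq, not_le]
  refine lt_of_lt_of_le hrs (le_iInf₂ fun a ha => ?_)
  have h : (y, a) ∈ {p : X × X | d p.1 p.2 ≤ (s : ℝ≥0∞)}ᶜ := hUV ⟨hy, hFV ha⟩
  simp only [mem_compl_iff, mem_setOf_eq, not_le] at h
  exact h.le
end

section
/- Let X be a regular Hausdorff topological space and d an extended metric on X such that for every closed set F ⊆ X and every r ∈ [0,∞) the set B̄(F,r) = {x : d(x,F) ≤ r} is closed in X. Then d is lower semi-continuous: for every r ∈ [0,∞) the set {(x,y) : d(x,y) ≤ r} is closed in X × X with the product topology. -/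
open Set Topology NNReal ENNReal

/-- on a regular Hausdorff space, if every closed set has closed metric
neighbourhoods then the extended metric is lower semi-continuous. -/
theorem stmt_2 {X : Type*} [TopologicalSpace X] [T2Space X] [RegularSpace X]
    (d : X → X → ℝ≥0∞) (hmet : IsExtMetric d)
    (h : ∀ F : Set X, IsClosed F → ∀ r : ℝ≥0, IsClosed {x : X | distToSet d x F ≤ (r : ℝ≥0∞)}) :
    ∀ r : ℝ≥0, IsClosed {p : X × X | d p.1 p.2 ≤ (r : ℝ≥0∞)} := by
  obtain ⟨-, hsymm, -⟩ := hmet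
  intro r
  rw [← isOpen_compl_iff, isOpen_iff_mem_nhds]
  rintro ⟨x, y⟩ hxy
  have hxy' : (r : ℝ≥0∞) < d x y := by simpa using hxy
  obtain ⟨s, hrs, hsd⟩ := ENNReal.lt_iff_exists_nnreal_btwn.1 hxy'
  have hx : {z : X | distToSet d z {y} ≤ (s : ℝ≥0∞)}ᶜ ∈ 𝓝 x := by
    refine (h {y} isClosed_singleton s).isOpen_compl.mem_nhds ?_
    simpa [distToSet] using hsd
  obtain ⟨F, hFx, hFc, hF⟩ := exists_mem_nhds_isClosed_subset hx
  have hy : {z : X | distToSet d z F ≤ (r : ℝ≥0∞)}ᶜ ∈ 𝓝 y := by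
    refine (h F hFc r).isOpen_compl.mem_nhds ?_
    have hle : (s : ℝ≥0∞) ≤ distToSet d y F := by
      refine le_iInf₂ fun a ha => ?_
      have h1 : (s : ℝ≥0∞) < d a y := by simpa [distToSet] using hF ha
      rw [hsymm y a]
      exact h1.le
    exact not_le.2 (hrs.trans_le hle)
  filter_upwards [prod_mem_nhds hFx hy]
  rintro ⟨a, b⟩ ⟨ha, hb⟩ hab
  have h1 : distToSet d b F ≤ d b a := iInf₂_le a ha
  rw [hsymm b a] at h1
  exact hb (h1.trans hab)
end

section
/- Every compact topometric space X is metrically complete: every sequence (x_n) in X that is Cauchy with respect to the metric d converges with respect to d to some point of X. -/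
open Set Topology NNReal ENNReal

/-- every compact topometric space is metrically complete: every sequence
which is Cauchy for the metric converges, for the metric, to a point of the space. -/
theorem stmt_4 {X : Type*} [TopologicalSpace X] [CompactSpace X] (d : X → X → ℝ≥0∞)
    (htm : IsTopometric d) (x : ℕ → X)
    (hcauchy : ∀ ε : ℝ≥0, 0 < ε → ∃ N : ℕ, ∀ m ≥ N, ∀ n ≥ N, d (x m) (x n) < (ε : ℝ≥0∞)) :
    ∃ a : X, ∀ ε : ℝ≥0, 0 < ε → ∃ N : ℕ, ∀ n ≥ N, d a (x n) < (ε : ℝ≥0∞) := by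
  obtain ⟨_, _, hlsc⟩ := htm
  obtain ⟨a, -, ha⟩ := isCompact_univ.ultrafilter_le_nhds
    ((Filter.hyperfilter ℕ).map x) (by simp)
  have hU : ((Filter.hyperfilter ℕ : Ultrafilter ℕ) : Filter ℕ) ≤ Filter.atTop :=
    Nat.hyperfilter_le_atTop
  have ht : Filter.Tendsto x (Filter.hyperfilter ℕ : Ultrafilter ℕ) (𝓝 a) := ha
  refine ⟨a, fun ε hε => ?_⟩
  obtain ⟨N, hN⟩ := hcauchy (ε / 2) (half_pos hε)
  refine ⟨N, fun n hn => ?_⟩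
  have hcl : IsClosed {y : X | d y (x n) ≤ ((ε / 2 : ℝ≥0) : ℝ≥0∞)} :=
    (hlsc (ε / 2)).preimage (f := fun y : X => (y, x n)) (by fun_prop)
  have hmem : a ∈ {y : X | d y (x n) ≤ ((ε / 2 : ℝ≥0) : ℝ≥0∞)} :=
    hcl.mem_of_tendsto ht
      (hU ((Filter.eventually_ge_atTop N).mono fun m hm => (hN m hm n hn).le))
  exact lt_of_le_of_lt hmem (ENNReal.coe_lt_coe.2 (half_lt_self hε.ne'))
end

section
/- Let X be a compact topometric space, Y a topometric space, and f : X → Y weakly locally uniformly continuous. Then f is uniformly continuous: for every ε > 0 there is δ > 0 such that for all x, x' ∈ X, d_X(x,x') < δ implies d_Y(f(x),f(x')) ≤ ε. -/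
open Set Topology NNReal ENNReal

/-- `f` is weakly locally uniformly continuous: every point has, for each `ε > 0`,
an open neighbourhood `U` and `δ > 0` such that points of `U` at distance `< δ`
have images at distance `≤ ε`. -/
def WeaklyLocUnifCont {X Y : Type*} [TopologicalSpace X] [TopologicalSpace Y]
    (dX : X → X → ℝ≥0∞) (dY : Y → Y → ℝ≥0∞) (f : X → Y) : Prop :=
  ∀ x : X, ∀ ε : ℝ≥0, 0 < ε → ∃ U : Set X, IsOpen U ∧ x ∈ U ∧ ∃ δ : ℝ≥0, 0 < δ ∧
    ∀ y ∈ U, ∀ y' ∈ U, dX y y' < (δ : ℝ≥0∞) → dY (f y) (f y') ≤ (ε : ℝ≥0∞)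

/-- a weakly locally uniformly continuous map from a compact topometric
space to a topometric space is uniformly continuous. -/
theorem stmt_5 {X Y : Type*} [TopologicalSpace X] [CompactSpace X] [TopologicalSpace Y]
    (dX : X → X → ℝ≥0∞) (dY : Y → Y → ℝ≥0∞)
    (hX : IsTopometric dX) (hY : IsTopometric dY) (f : X → Y)
    (hf : WeaklyLocUnifCont dX dY f) :
    ∀ ε : ℝ≥0, 0 < ε → ∃ δ : ℝ≥0, 0 < δ ∧
      ∀ x x' : X, dX x x' < (δ : ℝ≥0∞) → dY (f x) (f x') ≤ (ε : ℝ≥0∞) := by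
  intro ε hε
  have key : ∃ δ : ℝ≥0, 0 < δ ∧ ∀ p ∈ (Set.univ : Set (X × X)),
      dX p.1 p.2 < (δ : ℝ≥0∞) → dY (f p.1) (f p.2) ≤ (ε : ℝ≥0∞) := by
    refine IsCompact.induction_on (p := fun S : Set (X × X) => ∃ δ : ℝ≥0, 0 < δ ∧ ∀ p ∈ S,
      dX p.1 p.2 < (δ : ℝ≥0∞) → dY (f p.1) (f p.2) ≤ (ε : ℝ≥0∞)) isCompact_univ ?_ ?_ ?_ ?_
    · exact ⟨1, one_pos, fun p hp => absurd hp (Set.notMem_empty p)⟩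
    · rintro S T hST ⟨δ, h0, h⟩
      exact ⟨δ, h0, fun p hp => h p (hST hp)⟩
    · rintro S T ⟨δ, h0, h⟩ ⟨η, h0', h'⟩
      refine ⟨min δ η, lt_min h0 h0', ?_⟩
      rintro p (hp | hp) hlt
      · exact h p hp (hlt.trans_le (by exact_mod_cast min_le_left δ η))
      · exact h' p hp (hlt.trans_le (by exact_mod_cast min_le_right δ η))
    · rintro ⟨x, y⟩ -
      by_cases hxy : x = y
      · subst hxy
        obtain ⟨U, hU, hx, δ, h0, h⟩ := hf x ε hε
        exact ⟨U ×ˢ U, mem_nhdsWithin_of_mem_nhds ((hU.prod hU).mem_nhds ⟨hx, hx⟩), δ, h0,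
          fun p hp => h p.1 hp.1 p.2 hp.2⟩
      · have hpos : 0 < dX x y := pos_iff_ne_zero.2 fun h => hxy ((hX.1.1 x y).1 h)
        obtain ⟨δ, h0, h1⟩ := ENNReal.lt_iff_exists_nnreal_btwn.1 hpos
        refine ⟨{p : X × X | dX p.1 p.2 ≤ (δ : ℝ≥0∞)}ᶜ, mem_nhdsWithin_of_mem_nhds
          ((hX.2.2 δ).isOpen_compl.mem_nhds (not_le.2 h1)), δ, by exact_mod_cast h0, ?_⟩
        intro p hp hlt
        exact absurd hlt.le hp
  obtain ⟨δ, h0, h⟩ := key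
  exact ⟨δ, h0, fun x x' => h (x, x') (Set.mem_univ _)⟩
end

section
/- Let X be a compact topometric space and ∼ an equivalence relation on X which is closed as a subset of X × X and whose classes [x] satisfy d(x,[y]) = d([x],y) for all x, y ∈ X. Let Y = X/∼ with the quotient topology, let π : X → Y be the projection, and define d_Y(π(x),π(y)) = inf{d(x',y') : x' ∼ x, y' ∼ y}. Then d_Y is an extended metric making (Y, d_Y) a topometric space, and π is precise: d_Y(π(x), q) = d_X(x, π⁻¹(q)) for every x ∈ X and q ∈ Y. -/
open Set Topology NNReal ENNReal

/-- a closed equivalence relation on a compact topometric space satisfying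
`d(x,[y]) = d([x],y)` yields a topometric structure on the quotient for which the
projection is precise. -/
theorem stmt_8 {X : Type*} [TopologicalSpace X] [CompactSpace X]
    (d : X → X → ℝ≥0∞) (hX : IsTopometric d) (s : Setoid X)
    (hclosed : IsClosed {p : X × X | s.r p.1 p.2})
    (hclass : ∀ x y : X, distToSet d x {y' | s.r y y'} = distToSet d y {x' | s.r x x'})
    (dY : Quotient s → Quotient s → ℝ≥0∞)
    (hdY : ∀ x y : X, dY (Quotient.mk s x) (Quotient.mk s y) =
      ⨅ x' ∈ {x' | s.r x x'}, ⨅ y' ∈ {y' | s.r y y'}, d x' y') :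
    IsExtMetric dY ∧ MetricRefines dY ∧ LowerSemiContinuousMetric dY ∧
      ∀ (x : X) (q : Quotient s),
        dY (Quotient.mk s x) q = distToSet d x (Quotient.mk s ⁻¹' {q}) := by
  obtain ⟨⟨hd0, hdsymm, hdtri⟩, href, hlsc⟩ := hX
  have hT2 : T2Space X := by
    rw [t2_iff_isClosed_diagonal]
    have h := hlsc 0
    have e : {p : X × X | d p.1 p.2 ≤ ((0 : ℝ≥0) : ℝ≥0∞)} = diagonal X := by
      ext p
      simp [hd0]
    rwa [e] at h
  have srefl : ∀ x, s.r x x := fun x => s.iseqv.refl x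
  have ssymm : ∀ {x y}, s.r x y → s.r y x := fun h => s.iseqv.symm h
  have strans : ∀ {x y z}, s.r x y → s.r y z → s.r x z := fun h h' => s.iseqv.trans h h'
  have hclsEq : ∀ {x y}, s.r x y → {z | s.r x z} = {z | s.r y z} := by
    intro x y h
    ext z
    exact ⟨fun h' => strans (ssymm h) h', fun h' => strans h h'⟩
  have hinv : ∀ x x' y, s.r x x' →
      distToSet d x {y' | s.r y y'} = distToSet d x' {y' | s.r y y'} := by
    intro x x' y h
    rw [hclass, hclass x', hclsEq h]
  have hf : ∀ x y, dY (Quotient.mk s x) (Quotient.mk s y) = distToSet d x {y' | s.r y y'} := by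
    intro x y
    rw [hdY]
    apply le_antisymm
    · exact iInf₂_le_of_le x (srefl x) le_rfl
    · refine le_iInf₂ fun x' hx' => ?_
      rw [hinv x x' y hx']
      rfl
  have hle : ∀ x y, dY (Quotient.mk s x) (Quotient.mk s y) ≤ d x y := by
    intro x y
    rw [hf]
    exact iInf₂_le y (srefl y)
  have hclsClosed : ∀ y, IsClosed {y' | s.r y y'} := fun y =>
    hclosed.preimage (f := fun y' => (y, y')) (by fun_prop)
  have hl : ∀ x, LowerSemicontinuous (d x) := by
    intro x
    rw [lowerSemicontinuous_iff_isClosed_preimage]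
    intro r
    induction r with
    | top => simp
    | coe r => exact (hlsc r).preimage (f := fun y' => (x, y')) (by fun_prop)
  have hatt : ∀ x y, ∃ y', s.r y y' ∧ dY (Quotient.mk s x) (Quotient.mk s y) = d x y' := by
    intro x y
    obtain ⟨y', hy', hmin⟩ := ((hl x).lowerSemicontinuousOn {y' | s.r y y'}).exists_isMinOn
      ⟨y, srefl y⟩ (hclsClosed y).isCompact
    refine ⟨y', hy', ?_⟩
    rw [hf]
    exact le_antisymm (iInf₂_le y' hy') (le_iInf₂ fun z hz => hmin hz)
  have hmk : ∀ {x y}, s.r x y → Quotient.mk s x = Quotient.mk s y := fun h => Quotient.sound h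
  have hcont : Continuous (Quotient.mk s) := continuous_quotient_mk'
  have hclosedMap : IsClosedMap (Quotient.mk s) := by
    intro C hC
    have hq : IsQuotientMap (Quotient.mk s) := isQuotientMap_quotient_mk'
    rw [← hq.isClosed_preimage]
    have e : Quotient.mk s ⁻¹' (Quotient.mk s '' C) =
        Prod.snd '' ({p : X × X | s.r p.1 p.2} ∩ Prod.fst ⁻¹' C) := by
      ext y
      constructor
      · rintro ⟨x, hx, hxy⟩
        exact ⟨(x, y), ⟨Quotient.exact hxy, hx⟩, rfl⟩
      · rintro ⟨⟨x, z⟩, ⟨hr, hx⟩, rfl⟩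
        exact ⟨x, hx, hmk hr⟩
    rw [e]
    exact isClosedMap_snd_of_compactSpace _ (hclosed.inter (hC.preimage continuous_fst))
  have hpre : ∀ y, Quotient.mk s ⁻¹' {Quotient.mk s y} = {y' | s.r y y'} := by
    intro y
    ext z
    exact ⟨fun h => ssymm (Quotient.exact h), fun h => hmk (ssymm h)⟩
  have hproper : IsProperMap (Quotient.mk s) := by
    rw [isProperMap_iff_isClosedMap_and_compact_fibers]
    refine ⟨hcont, hclosedMap, fun q => ?_⟩
    induction q using Quotient.inductionOn with
    | h y => rw [hpre]; exact (hclsClosed y).isCompact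
  have hsymmY : ∀ p q, dY p q = dY q p := by
    intro p q
    induction p using Quotient.inductionOn with
    | h x =>
      induction q using Quotient.inductionOn with
      | h y => rw [hf, hf, hclass]
  refine ⟨⟨?_, hsymmY, ?_⟩, ?_, ?_, ?_⟩
  · intro p q
    induction p using Quotient.inductionOn with
    | h x =>
      induction q using Quotient.inductionOn with
      | h y =>
        constructor
        · intro h
          obtain ⟨y', hy', e⟩ := hatt x y
          rw [h] at e
          have : x = y' := (hd0 x y').1 e.symm
          subst this
          exact hmk (ssymm hy')
        · intro h
          rw [h]
          have := hle y y
          rw [(hd0 y y).2 rfl] at this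
          exact le_antisymm this bot_le
  · intro p q t
    induction p using Quotient.inductionOn with
    | h x =>
      induction q using Quotient.inductionOn with
      | h y =>
        induction t using Quotient.inductionOn with
        | h z =>
          obtain ⟨y', hy', e⟩ := hatt x y
          rw [e, hmk hy']
          obtain ⟨z', hz', e'⟩ := hatt y' z
          rw [e', hmk hz']
          exact (hle x z').trans (hdtri x y' z')
  · intro U hU p hp
    induction p using Quotient.inductionOn with
    | h x =>
      obtain ⟨r, hr, hB⟩ := href _ (hU.preimage hcont) x hp
      refine ⟨r, hr, fun q hq => ?_⟩
      induction q using Quotient.inductionOn with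
      | h y =>
        obtain ⟨y', hy', e⟩ := hatt x y
        rw [hmk hy']
        apply hB
        have hq' : dY (Quotient.mk s x) (Quotient.mk s y) < (r : ℝ≥0∞) := hq
        rw [e] at hq'
        exact hq'
  · intro r
    have e : {p : Quotient s × Quotient s | dY p.1 p.2 ≤ (r : ℝ≥0∞)} =
        Prod.map (Quotient.mk s) (Quotient.mk s) '' {p : X × X | d p.1 p.2 ≤ (r : ℝ≥0∞)} := by
      ext ⟨p, q⟩
      constructor
      · intro h
        induction p using Quotient.inductionOn with
        | h x =>
          induction q using Quotient.inductionOn with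
          | h y =>
            obtain ⟨y', hy', e⟩ := hatt x y
            have h' : dY (Quotient.mk s x) (Quotient.mk s y) ≤ (r : ℝ≥0∞) := h
            rw [e] at h'
            exact ⟨(x, y'), h', Prod.ext rfl (hmk (ssymm hy'))⟩
      · rintro ⟨⟨x, y⟩, h, e⟩
        rw [← e]
        exact (hle x y).trans h
    rw [e]
    exact (hproper.prodMap hproper).isClosedMap _ (hlsc r)
  · intro x q
    induction q using Quotient.inductionOn with
    | h y => rw [hf, hpre]
end

section
/- The set of weakly d-isolated points of a topometric space X is metrically closed: if x ∈ X is such that for every r > 0 there is a weakly d-isolated point y ∈ X with d(x,y) < r, then x is itself weakly d-isolated. -/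
open Set Topology NNReal ENNReal

/-- `x` is d-isolated: for every `r > 0`, `x` lies in the interior of the ball `B(x,r)`. -/
def DIsolated {X : Type*} [TopologicalSpace X] (d : X → X → ℝ≥0∞) (x : X) : Prop :=
  ∀ r : ℝ≥0, 0 < r → x ∈ interior {y : X | d x y < (r : ℝ≥0∞)}

/-- `x` is weakly d-isolated: for every `r > 0`, the ball `B(x,r)` has non-empty
interior. -/
def WeaklyDIsolated {X : Type*} [TopologicalSpace X] (d : X → X → ℝ≥0∞) (x : X) : Prop :=
  ∀ r : ℝ≥0, 0 < r → (interior {y : X | d x y < (r : ℝ≥0∞)}).Nonempty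

/-- the set of weakly d-isolated points of a topometric space is metrically
closed. -/
theorem stmt_9 {X : Type*} [TopologicalSpace X] (d : X → X → ℝ≥0∞)
    (htm : IsTopometric d) (x : X)
    (h : ∀ r : ℝ≥0, 0 < r → ∃ y : X, WeaklyDIsolated d y ∧ d x y < (r : ℝ≥0∞)) :
    WeaklyDIsolated d x := by
  intro r hr
  obtain ⟨y, hy, hxy⟩ := h (r / 2) (half_pos hr)
  refine (hy (r / 2) (half_pos hr)).mono (interior_mono ?_)
  intro z hz
  have hz' : d y z < ((r / 2 : ℝ≥0) : ℝ≥0∞) := hz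
  change d x z < (r : ℝ≥0∞)
  calc d x z ≤ d x y + d y z := htm.1.2.2 x y z
    _ < ((r / 2 : ℝ≥0) : ℝ≥0∞) + ((r / 2 : ℝ≥0) : ℝ≥0∞) := ENNReal.add_lt_add hxy hz'
    _ = (r : ℝ≥0∞) := by rw [← ENNReal.coe_add, add_halves]
end

section
/- Let π : X → Y be a morphism between locally compact topometric spaces, x ∈ X and y = π(x). If π is an open map and x is d-isolated in X, then y is d-isolated in Y. If π is weakly open (the image of every non-empty open set has non-empty interior) and x is weakly d-isolated in X, then y is weakly d-isolated in Y. -/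
open Set Topology NNReal ENNReal

/-- along a morphism of locally compact topometric spaces, (weak)
d-isolation is pushed forward when the map is (weakly) open. -/
theorem stmt_11 {X Y : Type*} [TopologicalSpace X] [LocallyCompactSpace X]
    [TopologicalSpace Y] [LocallyCompactSpace Y]
    (dX : X → X → ℝ≥0∞) (dY : Y → Y → ℝ≥0∞)
    (hX : IsTopometric dX) (hY : IsTopometric dY)
    (π : X → Y) (hcont : Continuous π) (hwluc : WeaklyLocUnifCont dX dY π) (x : X) :
    (IsOpenMap π → DIsolated dX x → DIsolated dY (π x)) ∧
    ((∀ U : Set X, IsOpen U → U.Nonempty → (interior (π '' U)).Nonempty) →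
      WeaklyDIsolated dX x → WeaklyDIsolated dY (π x)) := by
  have key : ∀ r : ℝ≥0, 0 < r → ∃ δ : ℝ≥0, 0 < δ ∧
      π '' interior {y : X | dX x y < (δ : ℝ≥0∞)} ⊆ {z : Y | dY (π x) z < (r : ℝ≥0∞)} := by
    intro r hr
    obtain ⟨U, hU, hxU, δ, hδ, h⟩ := hwluc x (r / 2) (half_pos hr)
    obtain ⟨s, hs, hsU⟩ := hX.2.1 U hU x hxU
    refine ⟨min δ s, lt_min hδ hs, ?_⟩
    rintro _ ⟨y, hy, rfl⟩
    have hy' : dX x y < ((min δ s : ℝ≥0) : ℝ≥0∞) := by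
      have := interior_subset hy
      exact this
    have h1 : dX x y < (δ : ℝ≥0∞) :=
      hy'.trans_le (ENNReal.coe_le_coe.2 (min_le_left _ _))
    have h2 : dX x y < (s : ℝ≥0∞) :=
      hy'.trans_le (ENNReal.coe_le_coe.2 (min_le_right _ _))
    exact (h x hxU y (hsU h2) h1).trans_lt (ENNReal.coe_lt_coe.2 (half_lt_self hr.ne'))
  constructor
  · intro ho hi r hr
    obtain ⟨δ, hδ, hsub⟩ := key r hr
    exact interior_maximal hsub (ho _ isOpen_interior) ⟨x, hi δ hδ, rfl⟩
  · intro ho hi r hr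
    obtain ⟨δ, hδ, hsub⟩ := key r hr
    exact (ho _ isOpen_interior (hi δ hδ)).mono (interior_mono hsub)
end

section
/- Let X be a topometric space, U ⊆ X an open subset, and ε > 0. If U is ε-bounded, then U is the union of open sets of diameter ≤ 2ε: for every a ∈ U there is an open set V with a ∈ V ⊆ U and diameter of V at most 2ε. -/
open Set Topology NNReal ENNReal

/-- `A` is ε-bounded: there is no infinite subset of `A` whose points are pairwise at
distance `> ε`. -/
def EpsBounded {X : Type*} (d : X → X → ℝ≥0∞) (ε : ℝ≥0) (A : Set X) : Prop :=
  ¬ ∃ S : Set X, S ⊆ A ∧ S.Infinite ∧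
    ∀ a ∈ S, ∀ b ∈ S, a ≠ b → (ε : ℝ≥0∞) < d a b

/-- an open ε-bounded subset of a topometric space is a union of open sets
of diameter at most `2ε`. -/
theorem stmt_13 {X : Type*} [TopologicalSpace X] (d : X → X → ℝ≥0∞)
    (htm : IsTopometric d) (U : Set X) (hU : IsOpen U) (ε : ℝ≥0) (hε : 0 < ε)
    (hb : EpsBounded d ε U) :
    ∀ a ∈ U, ∃ V : Set X, IsOpen V ∧ a ∈ V ∧ V ⊆ U ∧
      ∀ x ∈ V, ∀ y ∈ V, d x y ≤ ((2 * ε : ℝ≥0) : ℝ≥0∞) := by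
  obtain ⟨⟨h0, hs, ht⟩, -, hl⟩ := htm
  intro a ha
  have hop : ∀ x, IsOpen {y | (ε : ℝ≥0∞) < d x y} := by
    intro x
    have h := ((hl ε).isOpen_compl).preimage (Continuous.prodMk_right x)
    have e : {y | (ε : ℝ≥0∞) < d x y}
        = (fun y => (x, y)) ⁻¹' {p : X × X | d p.1 p.2 ≤ (ε : ℝ≥0∞)}ᶜ := by
      ext y
      simp
    rw [e]
    exact h
  by_cases hV : ∃ V : Set X, IsOpen V ∧ a ∈ V ∧ V ⊆ U ∧ ∀ x ∈ V, d a x ≤ (ε : ℝ≥0∞)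
  · obtain ⟨V, hVo, haV, hVU, hd⟩ := hV
    refine ⟨V, hVo, haV, hVU, fun x hx y hy => ?_⟩
    calc d x y ≤ d x a + d a y := ht x a y
      _ ≤ (ε : ℝ≥0∞) + ε := by
        rw [hs x a]
        exact add_le_add (hd x hx) (hd y hy)
      _ = ((2 * ε : ℝ≥0) : ℝ≥0∞) := by
        rw [two_mul, ENNReal.coe_add]
  · exfalso
    obtain ⟨f, hf, hr⟩ := exists_seq_of_forall_finset_exists
      (fun x => x ∈ U ∧ (ε : ℝ≥0∞) < d a x) (fun x y => (ε : ℝ≥0∞) < d x y) (by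
        intro s hsP
        by_contra hcon
        apply hV
        refine ⟨U ∩ ⋂ x ∈ s, {y | (ε : ℝ≥0∞) < d x y},
          hU.inter (isOpen_biInter_finset fun x _ => hop x), ⟨ha, ?_⟩, inter_subset_left, ?_⟩
        · simp only [mem_iInter, mem_setOf_eq]
          intro x hx
          rw [hs x a]
          exact (hsP x hx).2
        · rintro y ⟨hyU, hy⟩
          simp only [mem_iInter, mem_setOf_eq] at hy
          by_contra hlt
          exact hcon ⟨y, ⟨hyU, not_le.mp hlt⟩, hy⟩)
    have hne : ∀ m n, m ≠ n → (ε : ℝ≥0∞) < d (f m) (f n) := by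
      intro m n hmn
      rcases lt_or_gt_of_ne hmn with h | h
      · exact hr m n h
      · rw [hs]
        exact hr n m h
    have hinj : Function.Injective f := by
      intro m n hmn
      by_contra h
      have h1 := hne m n h
      rw [(h0 _ _).2 hmn] at h1
      exact not_lt_bot h1
    refine hb ⟨range f, ?_, infinite_range_of_injective hinj, ?_⟩
    · rintro _ ⟨n, rfl⟩
      exact (hf n).1
    · rintro _ ⟨m, rfl⟩ _ ⟨n, rfl⟩ h
      exact hne m n (fun e => h (by rw [e]))
end

section
/- Let X be a locally compact CB-analysable topometric space. Then the set of d-isolated points of X is topologically dense in X: every non-empty open subset of X contains a d-isolated point. -/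
open Set Topology NNReal ENNReal

/-- `A` has diameter at most `ε`. -/
def DiamLE {X : Type*} (d : X → X → ℝ≥0∞) (ε : ℝ≥0) (A : Set X) : Prop :=
  ∀ a ∈ A, ∀ b ∈ A, d a b ≤ (ε : ℝ≥0∞)

/-- `A` is ε-n-finite: there are no points `a 0, …, a n ∈ A` pairwise at distance
`> ε`. -/
def EpsNFinite {X : Type*} (d : X → X → ℝ≥0∞) (ε : ℝ≥0) (n : ℕ) (A : Set X) : Prop :=
  ¬ ∃ a : Fin (n + 1) → X, (∀ i, a i ∈ A) ∧
    ∀ i j : Fin (n + 1), i < j → (ε : ℝ≥0∞) < d (a i) (a j)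

/-- `A` is ε-finite: it is ε-n-finite for some `n`. -/
def EpsFinite {X : Type*} (d : X → X → ℝ≥0∞) (ε : ℝ≥0) (A : Set X) : Prop :=
  ∃ n : ℕ, EpsNFinite d ε n A

/-- `V` is a relatively open subset of `Y`. -/
def RelOpenIn {X : Type*} [TopologicalSpace X] (Y V : Set X) : Prop :=
  ∃ U : Set X, IsOpen U ∧ V = U ∩ Y

/-- The Cantor–Bendixson derivative of `Y` associated with a smallness predicate `P`:
remove from `Y` the union of all relatively open subsets of `Y` satisfying `P`. -/
def cbDeriv {X : Type*} [TopologicalSpace X] (P : Set X → Prop) (Y : Set X) : Set X :=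
  Y \ ⋃₀ {V : Set X | RelOpenIn Y V ∧ P V}

/-- The transfinite Cantor–Bendixson derivative sequence of a derivative operator `D`:
`univ` at `0`, apply `D` at successors, intersect at limits. -/
noncomputable def cbSeq {X : Type*} (D : Set X → Set X) (o : Ordinal) : Set X :=
  Ordinal.limitRecOn o Set.univ (fun _ ih => D ih)
    (fun o _ ih => ⋂ (b : Ordinal) (h : b < o), ih b h)

/-- `X` is CB-analysable: for every `ε > 0`, some transfinite (d,ε)-Cantor–Bendixson
derivative of `X` is empty. -/
def CBAnalysable (X : Type*) [TopologicalSpace X] (d : X → X → ℝ≥0∞) : Prop :=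
  ∀ ε : ℝ≥0, 0 < ε → ∃ α : Ordinal.{0}, cbSeq (cbDeriv (DiamLE d ε)) α = (∅ : Set X)

theorem exists_small_open {X : Type*} [TopologicalSpace X] (d : X → X → ℝ≥0∞) (ε : ℝ≥0)
    (W : Set X) (hW : IsOpen W) (α : Ordinal.{0})
    (h : ¬ W ⊆ cbSeq (cbDeriv (DiamLE d ε)) α) :
    ∃ V : Set X, IsOpen V ∧ DiamLE d ε V ∧ (W ∩ V).Nonempty := by
  induction α using Ordinal.limitRecOn with
  | zero => exact absurd (by simp [cbSeq]) h
  | add_one b ih =>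
    by_cases hb : W ⊆ cbSeq (cbDeriv (DiamLE d ε)) b
    · have hs : cbSeq (cbDeriv (DiamLE d ε)) (b + 1)
          = cbDeriv (DiamLE d ε) (cbSeq (cbDeriv (DiamLE d ε)) b) := by
        simp [cbSeq]
      rw [hs] at h
      obtain ⟨w, hw, hn⟩ := Set.not_subset.1 h
      have hw2 : w ∈ ⋃₀ {V : Set X | RelOpenIn (cbSeq (cbDeriv (DiamLE d ε)) b) V ∧
          DiamLE d ε V} := by
        by_contra hc
        exact hn ⟨hb hw, hc⟩
      obtain ⟨V, ⟨⟨U, hU, rfl⟩, hd⟩, hwV⟩ := hw2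
      exact ⟨U ∩ W, hU.inter hW, fun a ha c hc => hd a ⟨ha.1, hb ha.2⟩ c ⟨hc.1, hb hc.2⟩,
        w, hw, hwV.1, hw⟩
    · exact ih hb
  | limit o ho ih =>
    by_contra hc
    apply h
    rw [cbSeq, Ordinal.limitRecOn_limit _ _ _ _ ho]
    refine Set.subset_iInter₂ fun b hb => ?_
    by_contra hcon
    exact hc (ih b hb hcon)

theorem stmt_15 {X : Type*} [TopologicalSpace X] [LocallyCompactSpace X]
    (d : X → X → ℝ≥0∞) (htm : IsTopometric d) (han : CBAnalysable X d) :
    ∀ U : Set X, IsOpen U → U.Nonempty → ∃ x ∈ U, DIsolated d x := by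
  obtain ⟨⟨h0, -, -⟩, -, hl⟩ := htm
  have : T2Space X := by
    rw [t2_iff_isClosed_diagonal]
    convert hl 0 using 1
    ext ⟨x, y⟩
    simp [h0]
  let G : ℕ → Set X := fun n => ⋃₀ {V | IsOpen V ∧ DiamLE d (1 / ((n : ℝ≥0) + 1)) V}
  have hGo : ∀ n, IsOpen (G n) := fun n => isOpen_sUnion fun V hV => hV.1
  have hGd : ∀ n, Dense (G n) := by
    intro n
    rw [dense_iff_inter_open]
    rintro W hW ⟨w, hw⟩
    obtain ⟨α, hα⟩ := han (1 / ((n : ℝ≥0) + 1)) (by positivity)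
    obtain ⟨V, hV, hd, x, hx, hxV⟩ := exists_small_open d _ W hW α
      (fun hs => by rw [hα] at hs; exact hs hw)
    exact ⟨x, hx, V, ⟨hV, hd⟩, hxV⟩
  intro U hU hne
  obtain ⟨x, hxU, hx⟩ := (dense_iInter_of_isOpen_nat hGo hGd).inter_open_nonempty U hU hne
  refine ⟨x, hxU, fun r hr => ?_⟩
  obtain ⟨n, hn⟩ := exists_nat_one_div_lt (show (0 : ℝ) < r from hr)
  have hn' : 1 / ((n : ℝ≥0) + 1) < r := by
    rw [← NNReal.coe_lt_coe]; push_cast; exact hn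
  obtain ⟨V, ⟨hV, hd⟩, hxV⟩ := Set.mem_iInter.1 hx n
  exact mem_interior.2 ⟨V, fun y hy => lt_of_le_of_lt (hd x hxV y hy)
    (ENNReal.coe_lt_coe.2 hn'), hV, hxV⟩
end

section
/- Let X be a CB-analysable topometric space and let ℬ be a base of open sets for the topology of X with cardinality #ℬ ≤ κ for some infinite cardinal κ. Then there is a subset A ⊆ X with #A ≤ κ which is metrically dense: for every x ∈ X and every r > 0 there is a ∈ A with d(x,a) < r. -/
open Set Topology NNReal ENNReal

theorem cbSeq_zero' {X : Type*} (D : Set X → Set X) : cbSeq D (0 : Ordinal.{0}) = univ := by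
  unfold cbSeq; exact Ordinal.limitRecOn_zero ..

theorem cbSeq_succ' {X : Type*} (D : Set X → Set X) (o : Ordinal.{0}) :
    cbSeq D (o + 1) = D (cbSeq D o) := by
  unfold cbSeq; exact Ordinal.limitRecOn_add_one ..

theorem cbSeq_limit' {X : Type*} (D : Set X → Set X) (o : Ordinal.{0})
    (ho : Order.IsSuccLimit o) :
    cbSeq D o = ⋂ (b : Ordinal) (_ : b < o), cbSeq D b := by
  unfold cbSeq; exact Ordinal.limitRecOn_limit _ _ _ _ ho

theorem cbSeq_sub {X : Type*} (D : Set X → Set X) (hD : ∀ Y, D Y ⊆ Y) (b : Ordinal.{0})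
    (c : Ordinal.{0}) (h : b < c) : cbSeq D c ⊆ D (cbSeq D b) := by
  induction c using Ordinal.limitRecOn with
  | zero => simp at h
  | add_one c ih =>
    rw [cbSeq_succ']
    rcases (Order.lt_add_one_iff.1 h).lt_or_eq with h | h
    · exact (hD _).trans (ih h)
    · rw [h]
  | limit c hc ih =>
    rw [cbSeq_limit' _ _ hc, ← cbSeq_succ' D b]
    exact iInter₂_subset (b + 1) (by simpa using hc.succ_lt h)

theorem cbSeq_rank {X : Type*} (D : Set X → Set X) (x : X) (α : Ordinal.{0})
    (h : x ∉ cbSeq D α) : ∃ b : Ordinal.{0}, x ∈ cbSeq D b ∧ x ∉ D (cbSeq D b) := by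
  induction α using Ordinal.limitRecOn with
  | zero => simp [cbSeq_zero'] at h
  | add_one c ih =>
    rw [cbSeq_succ'] at h
    by_cases hx : x ∈ cbSeq D c
    · exact ⟨c, hx, h⟩
    · exact ih hx
  | limit c hc ih =>
    rw [cbSeq_limit' _ _ hc] at h
    simp only [mem_iInter, not_forall] at h
    obtain ⟨b, hb, hx⟩ := h
    exact ih b hb hx

/-- `B` isolates `x` at some stage of the derivative sequence. -/
def GoodAt {X : Type*} [TopologicalSpace X] (d : X → X → ℝ≥0∞) (ε : ℝ≥0) (B : Set X) (x : X) :
    Prop :=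
  ∃ b : Ordinal.{0}, x ∈ B ∩ cbSeq (cbDeriv (DiamLE d ε)) b ∧
    DiamLE d ε (B ∩ cbSeq (cbDeriv (DiamLE d ε)) b)

theorem GoodAt.dist_le {X : Type*} [TopologicalSpace X] {d : X → X → ℝ≥0∞} {ε : ℝ≥0} {B : Set X}
    (hB : IsOpen B) {x y : X} (hx : GoodAt d ε B x) (hy : GoodAt d ε B y) : d x y ≤ ε := by
  obtain ⟨b, hxb, hb⟩ := hx
  obtain ⟨c, hyc, hc⟩ := hy
  have key : ∀ (b c : Ordinal.{0}) (z : X), b < c →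
      DiamLE d ε (B ∩ cbSeq (cbDeriv (DiamLE d ε)) b) →
      z ∈ B ∩ cbSeq (cbDeriv (DiamLE d ε)) c → False := by
    intro b c z hlt hb hz
    have h1 := cbSeq_sub (cbDeriv (DiamLE d ε)) (fun Y => sdiff_subset) b c hlt hz.2
    exact h1.2 ⟨_, ⟨⟨B, hB, rfl⟩, hb⟩, hz.1, h1.1⟩
  rcases lt_trichotomy b c with h | h | h
  · exact (key b c y h hb hyc).elim
  · subst h
    exact hb x hxb y hyc
  · exact (key c b x h hc hxb).elim

theorem exists_goodAt {X : Type*} [TopologicalSpace X] {d : X → X → ℝ≥0∞} {ε : ℝ≥0}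
    {ℬ : Set (Set X)} (hbase : TopologicalSpace.IsTopologicalBasis ℬ)
    (h : ∃ α : Ordinal.{0}, cbSeq (cbDeriv (DiamLE d ε)) α = (∅ : Set X)) (x : X) :
    ∃ B ∈ ℬ, GoodAt d ε B x := by
  obtain ⟨α, hα⟩ := h
  obtain ⟨b, hxb, hn⟩ := cbSeq_rank (cbDeriv (DiamLE d ε)) x α (by simp [hα])
  have : x ∈ ⋃₀ {V : Set X | RelOpenIn (cbSeq (cbDeriv (DiamLE d ε)) b) V ∧ DiamLE d ε V} := by
    by_contra hc
    exact hn ⟨hxb, hc⟩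
  obtain ⟨V, ⟨⟨U, hU, rfl⟩, hV⟩, hxV⟩ := this
  obtain ⟨B, hB, hxB, hBU⟩ := hbase.exists_subset_of_mem_open hxV.1 hU
  exact ⟨B, hB, b, ⟨hxB, hxb⟩, fun a ha a' ha' =>
    hV a ⟨hBU ha.1, ha.2⟩ a' ⟨hBU ha'.1, ha'.2⟩⟩

/-- a CB-analysable topometric space with a base of open sets of
cardinality at most an infinite cardinal `κ` has a metrically dense subset of
cardinality at most `κ`. -/
theorem stmt_17 {X : Type*} [TopologicalSpace X] (d : X → X → ℝ≥0∞)
    (htm : IsTopometric d) (han : CBAnalysable X d)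
    (κ : Cardinal) (hκ : Cardinal.aleph0 ≤ κ)
    (ℬ : Set (Set X)) (hbase : TopologicalSpace.IsTopologicalBasis ℬ)
    (hcard : Cardinal.mk ℬ ≤ κ) :
    ∃ A : Set X, Cardinal.mk A ≤ κ ∧
      ∀ x : X, ∀ r : ℝ≥0, 0 < r → ∃ a ∈ A, d x a < (r : ℝ≥0∞) := by
  classical
  rcases isEmpty_or_nonempty X with hX | ⟨⟨x0⟩⟩
  · exact ⟨∅, by simp, fun x => isEmptyElim x⟩
  let e : ℕ → ℝ≥0 := fun n => 1 / ((n : ℝ≥0) + 1)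
  have he : ∀ n, 0 < e n := fun n => by positivity
  let f : ℕ × ℬ → X := fun p =>
    if h : ∃ x, GoodAt d (e p.1) (p.2 : Set X) x then h.choose else x0
  refine ⟨range f, ?_, ?_⟩
  · refine Cardinal.mk_range_le.trans ?_
    rw [Cardinal.mk_prod]
    simp only [Cardinal.mk_nat, Cardinal.lift_aleph0, Cardinal.lift_id, Cardinal.lift_uzero]
    exact Cardinal.mul_le_of_le hκ hκ hcard
  · intro x r hr
    obtain ⟨n, hn⟩ := exists_nat_one_div_lt hr
    obtain ⟨B, hB, hg⟩ := exists_goodAt hbase (han (e n) (he n)) x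
    refine ⟨f (n, ⟨B, hB⟩), mem_range_self _, ?_⟩
    have h : ∃ x, GoodAt d (e n) B x := ⟨x, hg⟩
    have hf : f (n, ⟨B, hB⟩) = h.choose := dif_pos h
    rw [hf]
    exact (hg.dist_le (hbase.isOpen hB) h.choose_spec).trans_lt (ENNReal.coe_lt_coe.2 hn)
end

section
/- Let X be a topometric space, ε > 0, and let (F_σ)_{σ ∈ 2^{<ω}} be an ε-perfect tree in X. Then there is a family (x_τ)_{τ ∈ 2^ω} of points of X with x_τ ∈ ⋂_{n<ω} F_{τ↾n} for each τ ∈ 2^ω and d(x_τ, x_{τ'}) > ε whenever τ ≠ τ'. Consequently, every metrically dense subset A of X (i.e. a set A such that for every x ∈ X and r > 0 there is a ∈ A with d(x,a) < r) has cardinality at least 2^{ℵ₀}. -/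
open Set Topology NNReal ENNReal

/-- Distance between two subsets. -/
noncomputable def setDist {X : Type*} (d : X → X → ℝ≥0∞) (A B : Set X) : ℝ≥0∞ :=
  ⨅ a ∈ A, ⨅ b ∈ B, d a b

/-- An ε-perfect tree: a family of non-empty compact sets indexed by finite binary
strings, decreasing along extensions, with the two successors of each node at distance
`> ε`. -/
def EpsPerfectTree {X : Type*} [TopologicalSpace X] (d : X → X → ℝ≥0∞) (ε : ℝ≥0)
    (F : List Bool → Set X) : Prop :=
  (∀ σ : List Bool, (F σ).Nonempty ∧ IsCompact (F σ)) ∧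
  (∀ σ τ : List Bool, σ <+: τ → F τ ⊆ F σ) ∧
  ∀ σ : List Bool, (ε : ℝ≥0∞) < setDist d (F (σ ++ [false])) (F (σ ++ [true]))

/-- an ε-perfect tree yields a family of points indexed by infinite binary
sequences, each lying in the corresponding branch, pairwise at distance `> ε`;
consequently every metrically dense subset has cardinality at least `2^ℵ₀`. -/
theorem stmt_18 {X : Type*} [TopologicalSpace X] (d : X → X → ℝ≥0∞)
    (htm : IsTopometric d) (ε : ℝ≥0) (hε : 0 < ε)
    (F : List Bool → Set X) (hF : EpsPerfectTree d ε F) :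
    (∃ g : (ℕ → Bool) → X,
      (∀ (τ : ℕ → Bool) (n : ℕ), g τ ∈ F (List.ofFn fun i : Fin n => τ i)) ∧
      ∀ τ τ' : ℕ → Bool, τ ≠ τ' → (ε : ℝ≥0∞) < d (g τ) (g τ')) ∧
    ∀ A : Set X, (∀ x : X, ∀ r : ℝ≥0, 0 < r → ∃ a ∈ A, d x a < (r : ℝ≥0∞)) →
      Cardinal.continuum ≤ Cardinal.mk A := by
  classical
  obtain ⟨⟨hd0, hsymm, htri⟩, -, hlsc⟩ := htm
  obtain ⟨hne, hmono, hsep⟩ := hF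
  have hT2 : T2Space X := by
    rw [t2_iff_isClosed_diagonal]
    have h := hlsc 0
    have e : {p : X × X | d p.1 p.2 ≤ ((0 : ℝ≥0) : ℝ≥0∞)} = Set.diagonal X := by
      ext p
      simp [hd0, Set.mem_diagonal_iff]
    rwa [e] at h
  have hsucc : ∀ (τ : ℕ → Bool) (n : ℕ),
      (List.ofFn fun i : Fin (n + 1) => τ i) = (List.ofFn fun i : Fin n => τ i) ++ [τ n] := by
    intro τ n
    rw [List.ofFn_succ_last]
    simp
  have hg : ∀ τ : ℕ → Bool, ∃ x, ∀ n : ℕ, x ∈ F (List.ofFn fun i : Fin n => τ i) := by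
    intro τ
    have := IsCompact.nonempty_iInter_of_sequence_nonempty_isCompact_isClosed
      (fun n : ℕ => F (List.ofFn fun i : Fin n => τ i))
      (fun n => hmono _ _ (by rw [hsucc]; exact List.prefix_append _ _))
      (fun n => (hne _).1) (hne _).2 (fun n => (hne _).2.isClosed)
    obtain ⟨x, hx⟩ := this
    exact ⟨x, fun n => Set.mem_iInter.1 hx n⟩
  choose g hgm using hg
  have hbase : ∀ (σ : List Bool) (a b : X), a ∈ F (σ ++ [false]) → b ∈ F (σ ++ [true]) →
      (ε : ℝ≥0∞) < d a b := by
    intro σ a b ha hb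
    refine (hsep σ).trans_le ?_
    exact (iInf₂_le a ha).trans (iInf₂_le b hb)
  have hdist : ∀ τ τ' : ℕ → Bool, τ ≠ τ' → (ε : ℝ≥0∞) < d (g τ) (g τ') := by
    intro τ τ' h
    have hex : ∃ n, τ n ≠ τ' n := Function.ne_iff.1 h
    have hn := Nat.find_spec hex
    have hlt : ∀ m < Nat.find hex, τ m = τ' m := fun m hm => not_not.1 (Nat.find_min hex hm)
    generalize Nat.find hex = n at hn hlt
    have e : (List.ofFn fun i : Fin n => τ i) = List.ofFn fun i : Fin n => τ' i := by
      congr 1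
      funext i
      exact hlt i i.2
    have h1 := hgm τ (n + 1)
    have h2 := hgm τ' (n + 1)
    rw [hsucc] at h1 h2
    rw [e] at h1
    cases ht : τ n <;> cases ht' : τ' n <;> rw [ht] at h1 <;> rw [ht'] at h2
    · exact absurd (ht.trans ht'.symm) hn
    · exact hbase _ _ _ h1 h2
    · rw [hsymm]
      exact hbase _ _ _ h2 h1
    · exact absurd (ht.trans ht'.symm) hn
  refine ⟨⟨g, hgm, hdist⟩, ?_⟩
  intro A hA
  choose f hfA hf using fun τ => hA (g τ) (ε / 2) (half_pos hε)
  have hinj : Function.Injective (fun τ => (⟨f τ, hfA τ⟩ : A)) := by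
    intro τ τ' h
    by_contra hne'
    have h' : f τ = f τ' := congrArg Subtype.val h
    have h1 := hf τ
    have h2 := hf τ'
    rw [← h', hsymm] at h2
    have h3 := (htri (g τ) (f τ) (g τ')).trans_lt (ENNReal.add_lt_add h1 h2)
    rw [← ENNReal.coe_add, add_halves] at h3
    exact absurd h3 (hdist τ τ' hne').le.not_gt
  have := Cardinal.mk_le_of_injective (hinj.comp ULift.down_injective)
  simpa using this
end

section
/- Let X be a locally compact, CB-analysable topometric space and let μ be a regular Borel probability measure on X (Borel with respect to the topology of X). Then for every ε > 0 there is a set K ⊆ X with μ(K) > 1 − ε such that K is metrically compact, i.e. K is totally bounded and complete with respect to the metric d (equivalently, K is compact in the topology induced on it by d). -/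
open Set Topology NNReal ENNReal

open MeasureTheory

lemma cb_small {X : Type*} [TopologicalSpace X] (d : X → X → ℝ≥0∞) (δ : ℝ≥0) (α : Ordinal.{0})
    (hα : cbSeq (cbDeriv (DiamLE d δ)) α = (∅ : Set X)) (C : Set X) (hC : C.Nonempty) :
    ∃ x ∈ C, ∃ U, IsOpen U ∧ x ∈ U ∧ DiamLE d δ (U ∩ C) := by
  by_contra hcon
  have key : ∀ β : Ordinal.{0}, C ⊆ cbSeq (cbDeriv (DiamLE d δ)) β := by
    intro β
    induction β using Ordinal.limitRecOn with
    | zero => simp [cbSeq]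
    | add_one β ih =>
      have e : cbSeq (cbDeriv (DiamLE d δ)) (β + 1) =
          cbDeriv (DiamLE d δ) (cbSeq (cbDeriv (DiamLE d δ)) β) := by
        unfold cbSeq
        exact Ordinal.limitRecOn_add_one _ _ _ _
      rw [e]
      intro x hx
      refine ⟨ih hx, ?_⟩
      rintro ⟨V, ⟨⟨U, hU, rfl⟩, hd⟩, hxV⟩
      exact hcon ⟨x, hx, U, hU, hxV.1, fun a ha b hb =>
        hd a ⟨ha.1, ih ha.2⟩ b ⟨hb.1, ih hb.2⟩⟩
    | limit β hβ ih =>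
      have e : cbSeq (cbDeriv (DiamLE d δ)) β =
          ⋂ (b : Ordinal.{0}) (_ : b < β), cbSeq (cbDeriv (DiamLE d δ)) b := by
        unfold cbSeq
        exact Ordinal.limitRecOn_limit _ _ _ _ hβ
      rw [e]
      exact Set.subset_iInter₂ ih
  obtain ⟨x, hx⟩ := hC
  have := key α hx
  rw [hα] at this
  exact this

lemma exists_cpt {X : Type*} [TopologicalSpace X] [MeasurableSpace X] (μ : MeasureTheory.Measure X)
    (hreg : ∀ S : Set X, MeasurableSet S →
      (μ S = ⨆ (K : Set X) (_ : IsCompact K ∧ K ⊆ S), μ K))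
    (S : Set X) (hS : MeasurableSet S) (h0 : μ S ≠ 0) : ∃ F, IsCompact F ∧ F ⊆ S ∧ μ F ≠ 0 := by
  by_contra hcon
  push Not at hcon
  apply h0
  rw [hreg S hS]
  simp only [ENNReal.iSup_eq_zero]
  rintro K ⟨h1, h2⟩
  exact hcon K h1 h2

lemma small_piece {X : Type*} [TopologicalSpace X] [MeasurableSpace X] [BorelSpace X]
    (d : X → X → ℝ≥0∞) (han : CBAnalysable X d) (μ : MeasureTheory.Measure X)
    (hreg : ∀ S : Set X, MeasurableSet S →
      (μ S = ⨆ (K : Set X) (_ : IsCompact K ∧ K ⊆ S), μ K))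
    (δ : ℝ≥0) (hδ : 0 < δ) (C : Set X) (hC : MeasurableSet C) (h0 : μ C ≠ 0) :
    ∃ F, IsCompact F ∧ F ⊆ C ∧ μ F ≠ 0 ∧ DiamLE d δ F := by
  obtain ⟨α, hα⟩ := han δ hδ
  set W : Set X := ⋃₀ {U | IsOpen U ∧ μ (U ∩ C) = 0} with hW
  have hWo : IsOpen W := isOpen_sUnion fun U hU => hU.1
  have hWC : μ (W ∩ C) = 0 := by
    by_contra hne
    obtain ⟨F, hF, hFs, hF0⟩ := exists_cpt μ hreg _ (hWo.measurableSet.inter hC) hne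
    obtain ⟨T, hT, hTf, hFT⟩ := hF.elim_finite_subcover_image
      (b := {U | IsOpen U ∧ μ (U ∩ C) = 0}) (c := id) (fun U hU => hU.1)
      (fun x hx => by simpa [hW, and_assoc] using (hFs hx).1)
    apply hF0
    have : F ⊆ ⋃ U ∈ T, (U ∩ C) := by
      intro x hx
      obtain ⟨U, hU, hxU⟩ := Set.mem_iUnion₂.1 (hFT hx)
      exact Set.mem_biUnion hU ⟨hxU, (hFs hx).2⟩
    refine MeasureTheory.measure_mono_null this ?_
    rw [MeasureTheory.measure_biUnion_null_iff hTf.countable]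
    exact fun U hU => (hT hU).2
  have hdiff : ∀ U, μ (U ∩ C) ≤ μ (U ∩ (C \ W)) := by
    intro U
    calc μ (U ∩ C) ≤ μ (U ∩ (C \ W) ∪ W ∩ C) := by
          apply MeasureTheory.measure_mono
          rintro x ⟨h1, h2⟩
          by_cases hx : x ∈ W
          · exact Or.inr ⟨hx, h2⟩
          · exact Or.inl ⟨h1, h2, hx⟩
      _ ≤ _ := MeasureTheory.measure_union_le _ _
      _ = _ := by rw [hWC, add_zero]
  have hne : (C \ W).Nonempty := by
    by_contra hemp
    rw [Set.not_nonempty_iff_eq_empty] at hemp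
    have := hdiff Set.univ
    rw [hemp] at this
    simp at this
    exact h0 this
  obtain ⟨x, hx, U, hU, hxU, hd⟩ := cb_small d δ α hα _ hne
  have hp : μ (U ∩ (C \ W)) ≠ 0 := by
    intro h
    apply hx.2
    exact ⟨U, ⟨hU, le_antisymm ((hdiff U).trans h.le) zero_le⟩, hxU⟩
  obtain ⟨F, hF, hFs, hF0⟩ := exists_cpt μ hreg _
    (hU.measurableSet.inter (hC.diff hWo.measurableSet)) hp
  exact ⟨F, hF, fun y hy => (hFs hy).2.1, hF0, fun a ha b hb => hd a (hFs ha) b (hFs hb)⟩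

lemma big_piece {X : Type*} [TopologicalSpace X] [T2Space X] [MeasurableSpace X] [BorelSpace X]
    (d : X → X → ℝ≥0∞) (han : CBAnalysable X d) (μ : MeasureTheory.Measure X)
    (hprob : MeasureTheory.IsProbabilityMeasure μ)
    (hreg : ∀ S : Set X, MeasurableSet S →
      (μ S = ⨆ (K : Set X) (_ : IsCompact K ∧ K ⊆ S), μ K))
    (δ : ℝ≥0) (hδ : 0 < δ) (c : ℝ≥0∞) (hc : c ≠ 0) :
    ∃ F, IsCompact F ∧ (∃ T : Set X, T.Finite ∧ F ⊆ ⋃ a ∈ T, {y | d a y ≤ δ}) ∧ μ Fᶜ < c := by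
  set G : Set (Set X) :=
    {F | IsCompact F ∧ (∃ T : Set X, T.Finite ∧ F ⊆ ⋃ a ∈ T, {y | d a y ≤ δ})} with hG
  set s : ℝ≥0∞ := sSup (μ '' G) with hs
  have hle : ∀ F ∈ G, μ F ≤ s := fun F hF => le_sSup ⟨F, hF, rfl⟩
  have hemp : (∅ : Set X) ∈ G := ⟨isCompact_empty, ∅, Set.finite_empty, by simp⟩
  have hs1 : s ≤ 1 := by
    apply sSup_le
    rintro _ ⟨F, -, rfl⟩
    exact MeasureTheory.prob_le_one
  have hst : s ≠ ⊤ := ne_top_of_le_ne_top ENNReal.one_ne_top hs1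
  obtain ⟨u, -, hu, huG⟩ := exists_seq_tendsto_sSup (S := μ '' G) ⟨_, ∅, hemp, rfl⟩ (OrderTop.bddAbove _)
  choose F hFG hFu using huG
  have hs_one : s = 1 := by
    have hA : MeasurableSet (⋃ n, F n) :=
      MeasurableSet.iUnion fun n => (hFG n).1.isClosed.measurableSet
    by_contra hne
    by_cases h0 : μ (⋃ n, F n)ᶜ = 0
    · have h1 : μ (⋃ n, F n) = 1 := by
        rwa [MeasureTheory.prob_compl_eq_zero_iff hA] at h0
      apply hne
      apply le_antisymm hs1
      rw [← h1, MeasureTheory.measure_iUnion_eq_iSup_accumulate]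
      apply iSup_le
      intro n
      apply hle
      choose T hT hFT using fun n => (hFG n).2
      refine ⟨?_, ⋃ i ∈ Set.Iic n, T i, (Set.finite_Iic n).biUnion fun i _ => hT i, ?_⟩
      · exact (Set.finite_Iic n).isCompact_biUnion fun i _ => (hFG i).1
      · intro x hx
        obtain ⟨i, hi, hxi⟩ := Set.mem_accumulate.1 hx
        obtain ⟨a, ha, hxa⟩ := Set.mem_iUnion₂.1 (hFT i hxi)
        exact Set.mem_biUnion (Set.mem_biUnion (show i ∈ Set.Iic n from hi) ha) hxa
    · obtain ⟨E, hE, hEA, hE0, hEd⟩ := small_piece d han μ hreg δ hδ _ hA.compl h0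
      have hb : ∀ n, u n + μ E ≤ s := by
        intro n
        rw [← hFu n, ← MeasureTheory.measure_union _ hE.isClosed.measurableSet]
        · apply hle
          obtain ⟨hc, T, hT, hFT⟩ := hFG n
          have hEne : E.Nonempty := by
            by_contra hh
            rw [Set.not_nonempty_iff_eq_empty] at hh
            simp [hh] at hE0
          obtain ⟨e, he⟩ := hEne
          refine ⟨hc.union hE, insert e T, hT.insert e, ?_⟩
          rintro x (hx | hx)
          · obtain ⟨a, ha, hxa⟩ := Set.mem_iUnion₂.1 (hFT hx)
            exact Set.mem_biUnion (Set.mem_insert_of_mem _ ha) hxa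
          · exact Set.mem_biUnion (Set.mem_insert _ _) (hEd e he x hx)
        · rw [Set.disjoint_left]
          intro x hx hxE
          exact hEA hxE (Set.mem_iUnion.2 ⟨n, hx⟩)
      have hlim := le_of_tendsto' (hu.add_const (μ E)) hb
      exact hE0 (by
        have : s + μ E ≤ s + 0 := by simpa using hlim
        simpa using (ENNReal.add_le_add_iff_left hst).1 this)
  by_contra hcon
  have hb : ∀ n, u n + c ≤ 1 := by
    intro n
    rw [← hFu n, ← MeasureTheory.prob_add_prob_compl (μ := μ) (hFG n).1.isClosed.measurableSet]
    gcongr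
    by_contra hlt
    exact hcon ⟨F n, (hFG n).1, (hFG n).2, not_le.1 hlt⟩
  have hlim := le_of_tendsto' (hu.add_const c) hb
  rw [← hs, hs_one] at hlim
  apply hc
  have : 1 + c ≤ 1 + 0 := by simpa using hlim
  simpa using (ENNReal.add_le_add_iff_left ENNReal.one_ne_top).1 this

/-- on a locally compact CB-analysable topometric space, a regular Borel
probability measure has, for every `ε > 0`, a set of measure `> 1 - ε` which is
metrically compact (totally bounded and complete for the metric `d`). -/
theorem stmt_19 {X : Type*} [TopologicalSpace X] [LocallyCompactSpace X]
    [MeasurableSpace X] [BorelSpace X]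
    (d : X → X → ℝ≥0∞) (htm : IsTopometric d) (han : CBAnalysable X d)
    (μ : Measure X) (hprob : IsProbabilityMeasure μ)
    (hreg : ∀ S : Set X, MeasurableSet S →
      (μ S = ⨆ (K : Set X) (_ : IsCompact K ∧ K ⊆ S), μ K) ∧
      (μ S = ⨅ (U : Set X) (_ : IsOpen U ∧ S ⊆ U), μ U)) :
    ∀ ε : ℝ≥0, 0 < ε → ∃ K : Set X,
      1 - (ε : ℝ≥0∞) < μ K ∧
      (∀ r : ℝ≥0, 0 < r → ∃ S : Set X, S.Finite ∧ S ⊆ K ∧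
        K ⊆ ⋃ a ∈ S, {y : X | d a y < (r : ℝ≥0∞)}) ∧
      (∀ x : ℕ → X, (∀ n, x n ∈ K) →
        (∀ δ : ℝ≥0, 0 < δ → ∃ N : ℕ, ∀ m ≥ N, ∀ n ≥ N, d (x m) (x n) < (δ : ℝ≥0∞)) →
        ∃ a ∈ K, ∀ δ : ℝ≥0, 0 < δ → ∃ N : ℕ, ∀ n ≥ N, d a (x n) < (δ : ℝ≥0∞)) := by
  intro ε hε
  obtain ⟨⟨hd0, hsymm, htri⟩, -, hlsc⟩ := htm
  have hT2 : T2Space X := by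
    rw [t2_iff_isClosed_diagonal]
    convert hlsc 0 using 1
    ext ⟨x, y⟩
    simp [hd0]
  have hεm : ((min ε 1 : ℝ≥0) : ℝ≥0∞) ≠ 0 := by
    have : min ε 1 ≠ 0 := (lt_min hε one_pos).ne'
    exact_mod_cast this
  obtain ⟨c, hc0, hcs⟩ := ENNReal.exists_pos_sum_of_countable hεm ℕ
  choose F hF hFT hFc using fun n : ℕ => big_piece d han μ hprob (fun S hS => (hreg S hS).1)
    (1 / ((n : ℝ≥0) + 1)) (by positivity) (c n) (by exact_mod_cast (hc0 n).ne')
  have hcl : IsClosed (⋂ n, F n) := isClosed_iInter fun n => (hF n).isClosed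
  have hcpt : IsCompact (⋂ n, F n) := (hF 0).of_isClosed_subset hcl (Set.iInter_subset _ 0)
  refine ⟨⋂ n, F n, ?_, ?_, ?_⟩
  · have h1 : μ (⋂ n, F n)ᶜ < ((min ε 1 : ℝ≥0) : ℝ≥0∞) := by
      rw [Set.compl_iInter]
      exact ((measure_iUnion_le _).trans (ENNReal.tsum_le_tsum fun n => (hFc n).le)).trans_lt hcs
    have h2 := prob_add_prob_compl (μ := μ) hcl.measurableSet
    have h3 : 1 - ((min ε 1 : ℝ≥0) : ℝ≥0∞) < μ (⋂ n, F n) := by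
      apply ENNReal.sub_lt_of_lt_add
      · exact_mod_cast min_le_right ε 1
      · rw [← h2]
        exact ENNReal.add_lt_add_left (measure_ne_top _ _) h1
    refine lt_of_le_of_lt ?_ h3
    apply tsub_le_tsub_left
    exact_mod_cast min_le_left ε 1
  · intro r hr
    obtain ⟨n, hn⟩ := exists_nat_gt (2 / r)
    have hnr : (1 / ((n : ℝ≥0) + 1)) + (1 / ((n : ℝ≥0) + 1)) < r := by
      rw [← add_div, div_lt_iff₀ (by positivity)]
      rw [div_lt_iff₀ hr] at hn
      calc (1 + 1 : ℝ≥0) = 2 := by norm_num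
        _ < n * r := hn
        _ ≤ r * (n + 1) := by rw [mul_comm]; gcongr; simp
    obtain ⟨T, hT, hFT⟩ := hFT n
    set T' : Set X := {a ∈ T | ∃ y ∈ ⋂ n, F n, d a y ≤ ((1 / ((n : ℝ≥0) + 1) : ℝ≥0) : ℝ≥0∞)}
    have hT' : T'.Finite := hT.subset (Set.sep_subset _ _)
    have hex : ∀ a : X, ∃ y, a ∈ T' →
        y ∈ ⋂ n, F n ∧ d a y ≤ ((1 / ((n : ℝ≥0) + 1) : ℝ≥0) : ℝ≥0∞) := by
      intro a
      by_cases ha : a ∈ T'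
      · obtain ⟨-, y, hy⟩ := ha
        exact ⟨y, fun _ => hy⟩
      · exact ⟨a, fun h => absurd h ha⟩
    choose f hf using hex
    refine ⟨f '' T', hT'.image f, ?_, ?_⟩
    · rintro _ ⟨a, ha, rfl⟩
      exact (hf a ha).1
    · intro x hx
      obtain ⟨a, ha, hxa⟩ := Set.mem_iUnion₂.1 (hFT (Set.mem_iInter.1 hx n))
      have haT : a ∈ T' := ⟨ha, x, hx, hxa⟩
      refine Set.mem_biUnion (Set.mem_image_of_mem f haT) ?_
      calc d (f a) x ≤ d (f a) a + d a x := htri _ _ _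
        _ ≤ ((1 / ((n : ℝ≥0) + 1) : ℝ≥0) : ℝ≥0∞) + ((1 / ((n : ℝ≥0) + 1) : ℝ≥0) : ℝ≥0∞) := by
            rw [hsymm (f a) a]
            exact add_le_add (hf a haT).2 hxa
        _ < r := by exact_mod_cast hnr
  · intro x hx hcau
    obtain ⟨a, haK, ha⟩ := hcpt.exists_mapClusterPt (f := Filter.atTop) (u := x)
      (Filter.tendsto_principal.2 (Filter.Eventually.of_forall hx))
    refine ⟨a, haK, fun δ hδ => ?_⟩
    obtain ⟨N, hN⟩ := hcau (δ / 2) (by positivity)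
    refine ⟨N, fun n hn => ?_⟩
    have hclosed : IsClosed {y | d (x n) y ≤ ((δ / 2 : ℝ≥0) : ℝ≥0∞)} :=
      (hlsc (δ / 2)).preimage (Continuous.prodMk_right (x n))
    have hmem : a ∈ {y | d (x n) y ≤ ((δ / 2 : ℝ≥0) : ℝ≥0∞)} := by
      rw [← hclosed.closure_eq]
      refine ClusterPt.mem_closure_of_mem ha _ ?_
      rw [Filter.mem_map]
      filter_upwards [Filter.eventually_ge_atTop N] with m hm
      exact (hN n hn m hm).le
    rw [hsymm]
    refine lt_of_le_of_lt hmem ?_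
    exact_mod_cast NNReal.half_lt_self hδ.ne'
end
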